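/- There exist a countable set X and weight structures d, m : X × X → [0,∞], both satisfying axioms (0) and (Σ), with d ≤ m pointwise and d ≠ m, such that the topologies ψ(d) and ψ(m) are incomparable: neither ψ(d) ⊆ ψ(m) nor ψ(m) ⊆ ψ(d). Consequently, on weight structures not assumed to satisfy the triangle inequality, the assignment d ↦ ψ(d) is not order-preserving. -/

import Mathlib

open scoped ENNReal

/-- Axiom (0). -/
def Ax0 {X : Type*} (d : X × X → ℝ≥0∞) : Prop := ∀ x : X, d (x, x) = 0

/-- Axiom (Σ). -/
def AxSym {X : Type*} (d : X × X → ℝ≥0∞) : Prop := ∀ x y : X, d (x, y) = d (y, x)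

/-- `ψ(d)`: the topology generated by the balls of `d` as a subbasis. -/
def psi {X : Type*} (d : X × X → ℝ≥0∞) : TopologicalSpace X :=
  TopologicalSpace.generateFrom
    {s : Set X | ∃ (x : X) (ε : ℝ≥0∞), 0 < ε ∧ s = {y : X | d (x, y) < ε}}

open scoped Topology

/-- The balls of `d` are open in `ψ(d)`. -/
theorem isOpen_psi_ball {X : Type*} (d : X × X → ℝ≥0∞) (x : X) {ε : ℝ≥0∞} (hε : 0 < ε) :
    IsOpen[psi d] {y : X | d (x, y) < ε} :=
  TopologicalSpace.isOpen_generateFrom_of_mem ⟨x, ε, hε, rfl⟩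

/-- If `b` is at least as close as `a` to every point, then every `ψ(d)`-open set containing `a`
contains `b`. -/
theorem mem_of_isOpen_psi {X : Type*} {d : X × X → ℝ≥0∞} {a b : X}
    (hab : ∀ z, d (z, b) ≤ d (z, a)) {s : Set X} (hs : IsOpen[psi d] s) (ha : a ∈ s) :
    b ∈ s := by
  induction hs with
  | basic s hs =>
    obtain ⟨x, ε, -, rfl⟩ := hs
    exact (hab x).trans_lt ha
  | univ => trivial
  | inter s t _ _ ihs iht => exact ⟨ihs ha.1, iht ha.2⟩
  | sUnion S _ ih =>
    obtain ⟨t, ht, hat⟩ := ha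
    exact ⟨t, ht, ih t ht hat⟩

/-- The `0`-`1` weight structure of the path `0 - 1 - 2`. -/
noncomputable def pathWeight (p : Fin 3 × Fin 3) : ℝ≥0∞ :=
  if p.1 = p.2 ∨ p.1 = 1 ∨ p.2 = 1 then 0 else 1

/-- The `0`-`1` weight structure of the graph on `{0, 1, 2}` whose only edge is `0 - 1`. -/
noncomputable def edgeWeight (p : Fin 3 × Fin 3) : ℝ≥0∞ :=
  if p.1 = 2 ↔ p.2 = 2 then 0 else 1

theorem isOpen_pathWeight_singleton_one : IsOpen[psi pathWeight] {(1 : Fin 3)} := by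
  have h : ({1} : Set (Fin 3)) =
      {y | pathWeight (0, y) < 1} ∩ {y | pathWeight (2, y) < 1} := by
    ext y
    fin_cases y <;> simp [pathWeight]
  rw [h]
  exact @IsOpen.inter _ (psi pathWeight) _ _ (isOpen_psi_ball _ 0 zero_lt_one)
    (isOpen_psi_ball _ 2 zero_lt_one)

theorem isOpen_edgeWeight_singleton_two : IsOpen[psi edgeWeight] {(2 : Fin 3)} := by
  have h : ({2} : Set (Fin 3)) = {y | edgeWeight (2, y) < 1} := by
    ext y
    fin_cases y <;> simp [edgeWeight]
  rw [h]
  exact isOpen_psi_ball _ 2 zero_lt_one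

/-- There are a countable set `X` and weight structures `d ≤ m`, `d ≠ m`,
both satisfying (0) and (Σ), whose topologies `ψ(d)` and `ψ(m)` are incomparable; hence
`ψ` is not order-preserving on weight structures without the triangle inequality. -/
theorem stmt10 :
    ∃ (X : Type) (_ : Countable X) (d m : X × X → ℝ≥0∞),
      (Ax0 d ∧ AxSym d) ∧ (Ax0 m ∧ AxSym m) ∧
      d ≤ m ∧ d ≠ m ∧
      ¬ psi d ≤ psi m ∧ ¬ psi m ≤ psi d := by
  refine ⟨Fin 3, inferInstance, pathWeight, edgeWeight, ⟨?_, ?_⟩, ⟨?_, ?_⟩, ?_, ?_, ?_, ?_⟩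
  · intro x
    simp [pathWeight]
  · intro x y
    fin_cases x <;> fin_cases y <;> simp [pathWeight]
  · intro x
    simp [edgeWeight]
  · intro x y
    fin_cases x <;> fin_cases y <;> simp [edgeWeight]
  · rintro ⟨x, y⟩
    fin_cases x <;> fin_cases y <;> simp [pathWeight, edgeWeight]
  · intro h
    simpa [pathWeight, edgeWeight] using congrFun h (1, 2)
  · intro h
    have hmem : (1 : Fin 3) ∈ ({2} : Set (Fin 3)) :=
      mem_of_isOpen_psi (a := 2) (fun z => by simp [pathWeight])
        (h _ isOpen_edgeWeight_singleton_two) rfl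
    simp at hmem
  · intro h
    have hmem : (0 : Fin 3) ∈ ({1} : Set (Fin 3)) :=
      mem_of_isOpen_psi (a := 1) (fun z => by simp [edgeWeight])
        (h _ isOpen_pathWeight_singleton_one) rfl
    simp at hmem
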